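/- arXiv:2307.05765 — 4 statements merged into one kernel-verified Lean document; each statement's English description precedes it below -/
import Mathlib

section
/- Let K be a field and let u, v, w ∈ K² be pairwise linearly independent vectors. Then there exist g ∈ SL(2,K), nonzero scalars c₁, c₂, c₃ ∈ K, and λ ∈ K, λ ≠ 0, such that g·u = c₁·e₁, g·v = c₂·e₂, g·w = c₃·(e₁ + λ·e₂), and moreover λ · det(u,v) · det(v,w) · det(w,u) is the square of a nonzero element of K. -/
/-!
The matrix with `x ↦ (det(x, v) / det(u, v), det(u, x))` has determinant one. Since `det` is
alternating, it sends `u` to `e₁`, `v` to a multiple of `e₂`, and `w` to a vector whose coordinates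
have ratio `λ = det(w, u) * det(u, v) / det(v, w)`. Multiplying `λ` by the three determinants clears
the denominator and leaves `(det(w, u) * det(u, v)) ^ 2`.
-/

open Matrix

section CommRing

variable {R : Type*} [CommRing R]

/-- The standard area form `det(u, v)` on `R²`, given by its coordinate expression.
Its nonvanishing detects linear independence, and its partial evaluations `det(·, v)` and
`det(u, ·)` are, up to scaling, the coordinates in the basis `u, v`. -/
def areaForm (u v : Fin 2 → R) : R := u 0 * v 1 - u 1 * v 0

theorem areaForm_self (u : Fin 2 → R) : areaForm u u = 0 := by
  unfold areaForm
  ring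

theorem areaForm_swap (u v : Fin 2 → R) : areaForm v u = -areaForm u v := by
  unfold areaForm
  ring

theorem areaForm_eq_det (u v : Fin 2 → R) : areaForm u v = (of ![u, v]).det := by
  simp [areaForm, det_fin_two]

theorem linearIndependent_pair_iff_areaForm_ne_zero [IsDomain R] {u v : Fin 2 → R} :
    LinearIndependent R ![u, v] ↔ areaForm u v ≠ 0 := by
  rw [areaForm_eq_det, ← nonsingular_iff_det_ne_zero, ← linearIndependent_row_iff]
  rfl

theorem exists_specialLinearGroup_mulVec_eq_areaForm {u v : Fin 2 → R} {a : R}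
    (ha : a * areaForm u v = 1) :
    ∃ g : SpecialLinearGroup (Fin 2) R,
      ∀ x, (g : Matrix (Fin 2) (Fin 2) R) *ᵥ x = ![a * areaForm x v, areaForm u x] := by
  unfold areaForm at *
  have hdet : !![a * v 1, -(a * v 0); -u 1, u 0].det = 1 := by
    rw [det_fin_two_of]
    linear_combination ha
  refine ⟨⟨_, hdet⟩, fun x ↦ ?_⟩
  have hfst : a * v 1 * x 0 + -(a * v 0) * x 1 = a * (x 0 * v 1 - x 1 * v 0) := by ring
  have hsnd : -u 1 * x 0 + u 0 * x 1 = u 0 * x 1 - u 1 * x 0 := by ring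
  rw [← hfst, ← hsnd]
  ext i
  fin_cases i <;> simp [mulVec, dotProduct, Fin.sum_univ_two]

end CommRing

theorem vec2_eq_smul_add_div_smul {K : Type*} [Semifield K] {a : K} (ha : a ≠ 0) (b : K) :
    ![a, b] = a • (![1, 0] + (b / a) • ![0, 1]) := by
  simp [mul_div_cancel₀ b ha]

theorem stmt2 (K : Type*) [Field K] (u v w : Fin 2 → K)
    (huv : LinearIndependent K ![u, v]) (hvw : LinearIndependent K ![v, w])
    (hwu : LinearIndependent K ![w, u]) :
    ∃ (g : Matrix.SpecialLinearGroup (Fin 2) K) (c₁ c₂ c₃ lam : K),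
      c₁ ≠ 0 ∧ c₂ ≠ 0 ∧ c₃ ≠ 0 ∧ lam ≠ 0 ∧
      (↑g : Matrix (Fin 2) (Fin 2) K).mulVec u = c₁ • ![1, 0] ∧
      (↑g : Matrix (Fin 2) (Fin 2) K).mulVec v = c₂ • ![0, 1] ∧
      (↑g : Matrix (Fin 2) (Fin 2) K).mulVec w = c₃ • (![1, 0] + lam • ![0, 1]) ∧
      ∃ t : K, t ≠ 0 ∧
        lam * ((u 0 * v 1 - u 1 * v 0) * (v 0 * w 1 - v 1 * w 0) * (w 0 * u 1 - w 1 * u 0))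
          = t ^ 2 := by
  rw [linearIndependent_pair_iff_areaForm_ne_zero] at huv hvw hwu
  obtain ⟨g, hg⟩ := exists_specialLinearGroup_mulVec_eq_areaForm (inv_mul_cancel₀ huv)
  have hc₃ : (areaForm u v)⁻¹ * areaForm w v ≠ 0 := by
    rw [areaForm_swap v w]
    exact mul_ne_zero (inv_ne_zero huv) (neg_ne_zero.mpr hvw)
  have huw : areaForm u w ≠ 0 := by
    rw [areaForm_swap w u]
    exact neg_ne_zero.mpr hwu
  refine ⟨g, 1, areaForm u v, _, _, one_ne_zero, huv, hc₃, div_ne_zero huw hc₃, ?_, ?_,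
    (hg w).trans (vec2_eq_smul_add_div_smul hc₃ _),
    areaForm w u * areaForm u v, mul_ne_zero hwu huv, ?_⟩
  · simp [hg, areaForm_self, huv]
  · simp [hg, areaForm_self]
  · change _ * (areaForm u v * areaForm v w * areaForm w u) = _
    rw [areaForm_swap v w, areaForm_swap w u]
    field_simp
end

section
/- Let K be a field and let λ, μ ∈ K be nonzero. There exist g ∈ SL(2,K) and nonzero scalars c₁, c₂, c₃ ∈ K with g·e₁ = c₁·e₁, g·e₂ = c₂·e₂ and g·(e₁ + λ·e₂) = c₃·(e₁ + μ·e₂) if and only if there exists t ∈ K, t ≠ 0, with λ = t²·μ. -/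
/-!
A matrix fixing the lines spanned by `e₁` and `e₂` is diagonal, and determinant one forces its
entries to be `t` and `t⁻¹`. It sends `e₁ + lam • e₂` to `t • e₁ + (t⁻¹ * lam) • e₂`, which is
proportional to `e₁ + mu • e₂` exactly when `t⁻¹ * lam = t * mu`.
-/

open Matrix

section Diagonal

variable {R : Type*} [NonAssocSemiring R]

theorem forall_mulVec_single_one_eq_smul_iff {n : Type*} [Fintype n] [DecidableEq n]
    (A : Matrix n n R) (c : n → R) :
    (∀ j, A *ᵥ Pi.single j 1 = c j • Pi.single j 1) ↔ A = diagonal c := by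
  have smul_single_eq_mulVec (j : n) :
      c j • Pi.single j (1 : R) = diagonal c *ᵥ Pi.single j 1 := by
    ext i
    rcases eq_or_ne i j with rfl | hij
    · rw [mulVec_diagonal, Pi.smul_apply, smul_eq_mul]
    · simp [hij]
  simp only [smul_single_eq_mulVec, mulVec_single_one]
  exact ⟨ext_col, fun h j => by rw [h]⟩

theorem mulVec_fin_two_eq_smul_iff_eq_diagonal (A : Matrix (Fin 2) (Fin 2) R) (a b : R) :
    A *ᵥ ![1, 0] = a • ![1, 0] ∧ A *ᵥ ![0, 1] = b • ![0, 1] ↔ A = diagonal ![a, b] := by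
  have single_zero : (Pi.single 0 1 : Fin 2 → R) = ![1, 0] := by
    ext i; fin_cases i <;> rfl
  have single_one : (Pi.single 1 1 : Fin 2 → R) = ![0, 1] := by
    ext i; fin_cases i <;> rfl
  rw [← forall_mulVec_single_one_eq_smul_iff, Fin.forall_fin_two, single_zero, single_one]
  rfl

theorem diagonal_mulVec_eq_smul_iff (a b c x y : R) :
    diagonal ![a, b] *ᵥ (![1, 0] + x • ![0, 1]) = c • (![1, 0] + y • ![0, 1]) ↔
      a = c ∧ b * x = c * y := by
  simp [funext_iff, Fin.forall_fin_two, mulVec_diagonal]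

end Diagonal

theorem mul_eq_mul_iff_eq_sq_mul {M : Type*} [CommMonoid M] {a b : M} (hab : a * b = 1)
    (x y : M) : b * x = a * y ↔ x = a ^ 2 * y := by
  constructor
  · intro h
    calc
      x = a * (b * x) := by rw [← mul_assoc, hab, one_mul]
      _ = a ^ 2 * y := by rw [h, sq, mul_assoc]
  · rintro rfl
    calc
      b * (a ^ 2 * y) = a * b * (a * y) := by rw [sq]; ac_rfl
      _ = a * y := by rw [hab, one_mul]

theorem stmt3_general (R : Type*) [CommRing R] (lam mu : R) :
    (∃ (g : SpecialLinearGroup (Fin 2) R) (c₁ c₂ c₃ : R),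
      IsUnit c₁ ∧ IsUnit c₂ ∧ IsUnit c₃ ∧
      (↑g : Matrix (Fin 2) (Fin 2) R) *ᵥ ![1, 0] = c₁ • ![1, 0] ∧
      (↑g : Matrix (Fin 2) (Fin 2) R) *ᵥ ![0, 1] = c₂ • ![0, 1] ∧
      (↑g : Matrix (Fin 2) (Fin 2) R) *ᵥ (![1, 0] + lam • ![0, 1])
        = c₃ • (![1, 0] + mu • ![0, 1])) ↔
    ∃ t : R, IsUnit t ∧ lam = t ^ 2 * mu := by
  constructor
  · rintro ⟨g, t, s, c₃, ht, -, -, he₁, he₂, hline⟩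
    have hg : (g : Matrix (Fin 2) (Fin 2) R) = diagonal ![t, s] :=
      (mulVec_fin_two_eq_smul_iff_eq_diagonal _ t s).mp ⟨he₁, he₂⟩
    have hts : t * s = 1 := by simpa [hg] using g.det_coe
    rw [hg] at hline
    obtain ⟨rfl, hslope⟩ := (diagonal_mulVec_eq_smul_iff t s c₃ lam mu).mp hline
    exact ⟨t, ht, (mul_eq_mul_iff_eq_sq_mul hts lam mu).mp hslope⟩
  · rintro ⟨t, ht, hlam⟩
    obtain ⟨s, hts⟩ := ht.exists_right_inv
    obtain ⟨he₁, he₂⟩ := (mulVec_fin_two_eq_smul_iff_eq_diagonal _ t s).mpr rfl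
    have hslope : s * lam = t * mu := (mul_eq_mul_iff_eq_sq_mul hts lam mu).mpr hlam
    exact ⟨⟨diagonal ![t, s], by simpa using hts⟩, t, s, t,
      ht, .of_mul_eq_one_right t hts, ht, he₁, he₂,
      (diagonal_mulVec_eq_smul_iff t s t lam mu).mpr ⟨rfl, hslope⟩⟩

theorem stmt3 (K : Type*) [Field K] (lam mu : K) (hlam : lam ≠ 0) (hmu : mu ≠ 0) :
    (∃ (g : Matrix.SpecialLinearGroup (Fin 2) K) (c₁ c₂ c₃ : K),
      c₁ ≠ 0 ∧ c₂ ≠ 0 ∧ c₃ ≠ 0 ∧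
      (↑g : Matrix (Fin 2) (Fin 2) K).mulVec ![1, 0] = c₁ • ![1, 0] ∧
      (↑g : Matrix (Fin 2) (Fin 2) K).mulVec ![0, 1] = c₂ • ![0, 1] ∧
      (↑g : Matrix (Fin 2) (Fin 2) K).mulVec (![1, 0] + lam • ![0, 1])
        = c₃ • (![1, 0] + mu • ![0, 1])) ↔
    ∃ t : K, t ≠ 0 ∧ lam = t ^ 2 * mu := by
  simpa only [isUnit_iff_ne_zero] using stmt3_general K lam mu
end

section
/- Let σ be a permutation of {0,1,…,m−1} and let j ∈ {0,1,…,m−1}. Define inv(j) to be the number of indices i such that either (i < j and σ(j) < σ(i)) or (j < i and σ(i) < σ(j)). Then inv(j) has the same parity as σ(j) + j; equivalently, (−1)^{inv(j)} = (−1)^{σ(j)−j}. -/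
/-!
The indices inverted with `j` are those lying in exactly one of `{i | i < j}` and
`{i | σ i < σ j}`. These sets have `j` and `σ j` elements, and the cardinality of a symmetric
difference has the same parity as the sum of the two cardinalities.
-/

open Set
open scoped symmDiff

section

variable {α β : Type*}

theorem ncard_symmDiff_add_two_mul_ncard_inter {s t : Set α} (hs : s.Finite) (ht : t.Finite) :
    (s ∆ t).ncard + 2 * (s ∩ t).ncard = s.ncard + t.ncard := by
  have card_symmDiff : (s ∆ t).ncard = (s \ t).ncard + (t \ s).ncard :=
    ncard_union_eq disjoint_sdiff_sdiff hs.sdiff ht.sdiff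
  have card_left : (s ∩ t).ncard + (s \ t).ncard = s.ncard :=
    ncard_inter_add_ncard_sdiff_eq_ncard s t hs
  have card_right : (s ∩ t).ncard + (t \ s).ncard = t.ncard :=
    inter_comm t s ▸ ncard_inter_add_ncard_sdiff_eq_ncard t s ht
  lia

theorem ncard_symmDiff_modEq_two {s t : Set α} (hs : s.Finite) (ht : t.Finite) :
    (s ∆ t).ncard ≡ s.ncard + t.ncard [MOD 2] := by
  rw [← ncard_symmDiff_add_two_mul_ncard_inter hs ht]
  exact (Nat.add_mul_mod_self_left _ 2 _).symm

theorem ncard_Iio_fin {m : ℕ} (j : Fin m) : (Iio j).ncard = j := by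
  rw [← Finset.coe_Iio, ncard_coe_finset, Fin.card_Iio]

variable [LinearOrder α] [LinearOrder β]

/-- The set of indices `i` forming an inversion of `f` together with `j`, in either order; its
cardinality is `inv(j)`. -/
def inversionsAt (f : α → β) (j : α) : Set α :=
  {i | (i < j ∧ f j < f i) ∨ (j < i ∧ f i < f j)}

theorem inversionsAt_eq_symmDiff {f : α → β} (hf : f.Injective) (j : α) :
    inversionsAt f j = Iio j ∆ (f ⁻¹' Iio (f j)) := by
  ext i
  simp only [inversionsAt, mem_ofPred_eq, mem_symmDiff, mem_Iio, mem_preimage, not_lt]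
  rcases eq_or_ne i j with rfl | hij
  · simp
  · rw [hij.symm.le_iff_lt, (hf.ne hij.symm).le_iff_lt, and_comm (a := j < i)]

theorem stmt9_general (σ : α ≃ β) {j : α} (hj : (Iio j).Finite) (hσj : (Iio (σ j)).Finite) :
    (inversionsAt σ j).Finite ∧
    (inversionsAt σ j).ncard ≡ (Iio (σ j)).ncard + (Iio j).ncard [MOD 2] ∧
    (-1 : ℤ) ^ (inversionsAt σ j).ncard = (-1 : ℤ) ^ ((Iio (σ j)).ncard + (Iio j).ncard) := by
  have preimage_finite : (σ ⁻¹' Iio (σ j)).Finite := hσj.preimage σ.injective.injOn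
  have ncard_preimage : (σ ⁻¹' Iio (σ j)).ncard = (Iio (σ j)).ncard :=
    ncard_preimage_of_injective_subset_range σ.injective (by simp)
  have parity : (inversionsAt σ j).ncard ≡ (Iio (σ j)).ncard + (Iio j).ncard [MOD 2] := by
    rw [inversionsAt_eq_symmDiff σ.injective, ← ncard_preimage, add_comm]
    exact ncard_symmDiff_modEq_two hj preimage_finite
  refine ⟨?_, parity, ?_⟩
  · rw [inversionsAt_eq_symmDiff σ.injective]
    exact hj.symmDiff preimage_finite
  · rw [neg_one_pow_eq_pow_mod_two, parity, ← neg_one_pow_eq_pow_mod_two]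

end

theorem stmt9 (m : ℕ) (σ : Equiv.Perm (Fin m)) (j : Fin m) :
    ((Finset.univ.filter fun i : Fin m =>
        (i < j ∧ σ j < σ i) ∨ (j < i ∧ σ i < σ j)).card ≡ (σ j : ℕ) + (j : ℕ) [MOD 2]) ∧
    ((-1 : ℤ) ^ (Finset.univ.filter fun i : Fin m =>
        (i < j ∧ σ j < σ i) ∨ (j < i ∧ σ i < σ j)).card
      = (-1 : ℤ) ^ ((σ j : ℕ) + (j : ℕ))) := by
  simpa only [inversionsAt, ncard_Iio_fin, ← ncard_coe_finset, Finset.coe_filter_univ] using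
    (stmt9_general σ (toFinite (Iio j)) (toFinite (Iio (σ j)))).2
end

section
/- Let K be a field, V and W vector spaces over K of dimensions n and k respectively (n, k ≥ 1). Let (v_0,…,v_n) be a linearly generic tuple in V with Σ_{i=0}^n α_i v_i = 0 and Σ_{i=0}^n α_i = 1, and let (w_0,…,w_k) be a linearly generic tuple in W with Σ_{j=0}^k β_j w_j = 0 and Σ_{j=0}^k β_j = 1. Set A_u = Σ_{i=0}^u α_i and B_s = Σ_{j=0}^s β_j. Let γ be an admissible path and let C_{−1},C_0,…,C_{n+k} be the associated sequence. Then: (a) Σ_{j=0}^{n+k} (C_j − C_{j−1})·(v_{γ(j)_1}, w_{γ(j)_2}) = 0 in V × W; (b) any scalars Ξ_0,…,Ξ_{n+k} with Σ_j Ξ_j·(v_{γ(j)_1}, w_{γ(j)_2}) = 0 and Σ_j Ξ_j = 1 satisfy Ξ_j = C_j − C_{j−1} for all j; (c) if A_u ≠ B_s for all 0 ≤ u ≤ n−1 and 0 ≤ s ≤ k−1, then all the coefficients C_j − C_{j−1} are nonzero. -/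
/-- An admissible path on the `n × k` grid: a shortest lattice path from `(0,0)`
to `(n,k)`, each step going right or up. Only the values `γ 0, …, γ (n+k)` matter. -/
def AdmissiblePath (n k : ℕ) (γ : ℕ → Fin (n + 1) × Fin (k + 1)) : Prop :=
  γ 0 = (0, 0) ∧ γ (n + k) = (Fin.last n, Fin.last k) ∧
  ∀ j < n + k,
    (((γ (j + 1)).1 : ℕ) = ((γ j).1 : ℕ) + 1 ∧ (γ (j + 1)).2 = (γ j).2) ∨
    ((γ (j + 1)).1 = (γ j).1 ∧ ((γ (j + 1)).2 : ℕ) = ((γ j).2 : ℕ) + 1)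

/-- The partial sum `A_u = Σ_{i=0}^u α_i`. -/
def partialSum {K : Type*} [Field K] {n : ℕ} (α : Fin (n + 1) → K) (u : ℕ) : K :=
  ∑ i : Fin (n + 1), if (i : ℕ) ≤ u then α i else 0

/-- The sequence `C_0, …, C_{n+k}` attached to an admissible path `γ`:
`C_{n+k} = 1`, and for `j < n+k`, `C_j = A_i` if the `j`-th step of `γ` increases
the first coordinate from `i` to `i+1`, and `C_j = B_i` if the `j`-th step increases
the second coordinate from `i` to `i+1` (here `A` and `B` are the partial-sum
sequences of `α` and `β`). -/
def pathC {K : Type*} [Field K] {n k : ℕ} (α : Fin (n + 1) → K) (β : Fin (k + 1) → K)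
    (γ : ℕ → Fin (n + 1) × Fin (k + 1)) : ℕ → K := fun j =>
  if j = n + k then 1
  else if ((γ (j + 1)).1 : ℕ) = ((γ j).1 : ℕ) + 1
  then partialSum α ((γ j).1 : ℕ)
  else partialSum β ((γ j).2 : ℕ)

/-- The coefficient `C_j − C_{j−1}`, with the convention `C_{−1} = 0`. -/
def pathD {K : Type*} [Field K] {n k : ℕ} (α : Fin (n + 1) → K) (β : Fin (k + 1) → K)
    (γ : ℕ → Fin (n + 1) × Fin (k + 1)) : ℕ → K := fun j =>
  pathC α β γ j - (if j = 0 then 0 else pathC α β γ (j - 1))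

/-!
Write `p j = (v (γ j).1, w (γ j).2)`. Summation by parts turns `∑ Ξ j • p j` with `∑ Ξ j = 1` into
`p (n + k) - ∑ S j • (p (j + 1) - p j)`, where `S j` is the `j`-th partial sum of `Ξ`. Every
difference `p (j + 1) - p j` is `(v (u + 1) - v u, 0)` or `(0, w (t + 1) - w t)`, and along `γ` each
of these `n + k` vectors occurs exactly once. They are linearly independent because `v` and `w` are
affinely independent, so the relation determines `S`; summation by parts for the relations `α` and
`β` shows that `S = C` solves it. Finally, `C j - C (j - 1)` is some `α i` or `β i`, nonzero by
genericity, if two consecutive steps have the same direction or `j` is an endpoint, and otherwise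
`±(A u - B s)`.
-/

section PartialSum

variable {K : Type*} [Field K] {n : ℕ}

/-- The backward difference `C_j - C_{j-1}` of a sequence, with `C_{-1} = 0`; this is how `pathD`
arises from `pathC`, and it inverts `partialSum`. -/
def backwardDiff {G : Type*} [AddGroup G] (C : ℕ → G) (j : ℕ) : G :=
  C j - if j = 0 then 0 else C (j - 1)

theorem partialSum_zero (α : Fin (n + 1) → K) : partialSum α 0 = α 0 := by
  simp [partialSum]

theorem partialSum_last (α : Fin (n + 1) → K) : partialSum α n = ∑ i, α i :=
  Finset.sum_congr rfl fun i _ => if_pos i.is_le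

theorem partialSum_comp_castSucc (α : Fin (n + 2) → K) {u : ℕ} (hu : u ≤ n) :
    partialSum (fun i : Fin (n + 1) => α i.castSucc) u = partialSum α u := by
  have hlast : ¬ n + 1 ≤ u := by omega
  simp [partialSum, Fin.sum_univ_castSucc (n := n + 1), hlast]

theorem partialSum_succ (α : Fin (n + 1) → K) (u : Fin n) :
    partialSum α u.succ = partialSum α u.castSucc + α u.succ := by
  have hsplit (i : Fin (n + 1)) : (if (i : ℕ) ≤ u.succ then α i else 0) =
      (if (i : ℕ) ≤ u.castSucc then α i else 0) + if i = u.succ then α i else 0 := by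
    simp only [Fin.val_succ, Fin.val_castSucc, Fin.ext_iff]
    split_ifs <;> first | omega | simp
  simp only [partialSum, hsplit, Finset.sum_add_distrib, Finset.sum_ite_eq', Finset.mem_univ,
    if_true]

theorem backwardDiff_partialSum (α : Fin (n + 1) → K) (i : Fin (n + 1)) :
    backwardDiff (partialSum α) i = α i := by
  cases i using Fin.cases with
  | zero => simp [backwardDiff, partialSum_zero]
  | succ u => rw [backwardDiff, partialSum_succ]; simp

theorem partialSum_backwardDiff (C : ℕ → K) (i : Fin (n + 1)) :
    partialSum (fun j : Fin (n + 1) => backwardDiff C j) i = C i := by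
  induction i using Fin.induction with
  | zero => simp [partialSum_zero, backwardDiff]
  | succ u ih => rw [partialSum_succ, ih]; simp [backwardDiff]

end PartialSum

section SummationByParts

variable {K V : Type*} [Field K] [AddCommGroup V] [Module K V] {n : ℕ}

/-- The edge vectors `v_{u+1} - v_u` of the polygonal line `v_0, …, v_n`. -/
def consecutiveDiff (v : Fin (n + 1) → V) (u : Fin n) : V :=
  v u.succ - v u.castSucc

theorem sum_smul_eq_sub_sum_partialSum_smul (a : Fin (n + 1) → K) (v : Fin (n + 1) → V) :
    ∑ i, a i • v i =
      (∑ i, a i) • v (Fin.last n) - ∑ u : Fin n, partialSum a u • consecutiveDiff v u := by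
  induction n with
  | zero => simp
  | succ n ih =>
    have hlast : partialSum a n = ∑ i : Fin (n + 1), a i.castSucc := by
      rw [← partialSum_comp_castSucc a le_rfl, partialSum_last]
    have hinit (u : Fin n) : partialSum (fun i : Fin (n + 1) => a i.castSucc) u = partialSum a u :=
      partialSum_comp_castSucc a u.is_lt.le
    rw [Fin.sum_univ_castSucc, ih (fun i => a i.castSucc) (fun i => v i.castSucc),
      Fin.sum_univ_castSucc a,
      Fin.sum_univ_castSucc fun u : Fin (n + 1) => partialSum a u • consecutiveDiff v u]
    simp only [hinit, Fin.val_last, Fin.val_castSucc, hlast, consecutiveDiff, Fin.succ_last,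
      Fin.succ_castSucc]
    module

theorem sum_partialSum_smul_consecutiveDiff {α : Fin (n + 1) → K} {v : Fin (n + 1) → V}
    (hα0 : ∑ i, α i • v i = 0) (hα1 : ∑ i, α i = 1) :
    ∑ u : Fin n, partialSum α u • consecutiveDiff v u = v (Fin.last n) := by
  rw [sum_smul_eq_sub_sum_partialSum_smul, hα1, one_smul] at hα0
  exact (sub_eq_zero.mp hα0).symm

theorem linearIndependent_consecutiveDiff {v : Fin (n + 1) → V} (hv : AffineIndependent K v) :
    LinearIndependent K (consecutiveDiff v) := by
  rw [Fintype.linearIndependent_iff]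
  intro g hg
  -- Extended by zero, `g` is the sequence of partial sums of an affine relation `c` among `v`.
  let G : ℕ → K := fun u => if h : u < n then g ⟨u, h⟩ else 0
  let c : Fin (n + 1) → K := fun i => backwardDiff G i
  have hG (u : Fin n) : partialSum c u = g u := by
    simpa [G] using partialSum_backwardDiff G u.castSucc
  have hc_sum : ∑ i, c i = 0 := by
    rw [← partialSum_last]
    simpa [G] using partialSum_backwardDiff G (Fin.last n)
  have hc_rel : ∑ i, c i • v i = 0 := by
    simp only [sum_smul_eq_sub_sum_partialSum_smul, hc_sum, hG, hg, zero_smul, sub_zero]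
  have hc (i : Fin (n + 1)) : c i = 0 :=
    affineIndependent_iff.mp hv Finset.univ c hc_sum hc_rel i (Finset.mem_univ i)
  intro u
  simp [← hG u, partialSum, hc]

end SummationByParts

section Genericity

variable {K V : Type*} [Field K] [AddCommGroup V] [Module K V] {n : ℕ}

variable (K) in
/-- Linear genericity of an `(n+1)`-tuple: any `n` of its vectors are linearly independent. The
ambient dimension is left arbitrary. -/
def LinearlyGeneric (v : Fin (n + 1) → V) : Prop :=
  ∀ s : Finset (Fin (n + 1)), s.card = n → LinearIndependent K (fun i : s => v i.1)

namespace LinearlyGeneric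

theorem eq_zero_of_apply_eq_zero {v : Fin (n + 1) → V} (hv : LinearlyGeneric K v)
    {c : Fin (n + 1) → K} (hc : ∑ i, c i • v i = 0) {i₀ : Fin (n + 1)} (hi₀ : c i₀ = 0) :
    c = 0 := by
  have hindep := linearIndepOn_finset_iff.mp (hv (Finset.univ.erase i₀) (by simp))
  have herase : ∑ i ∈ Finset.univ.erase i₀, c i • v i = 0 := by
    rwa [Finset.sum_erase _ (by rw [hi₀, zero_smul])]
  funext i
  by_cases hi : i = i₀
  · rw [hi, hi₀, Pi.zero_apply]
  · exact hindep c herase i (by simp [hi])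

theorem apply_ne_zero {v : Fin (n + 1) → V} (hv : LinearlyGeneric K v) {c : Fin (n + 1) → K}
    (hc : ∑ i, c i • v i = 0) (hc0 : c ≠ 0) (i : Fin (n + 1)) : c i ≠ 0 :=
  fun hi => hc0 (hv.eq_zero_of_apply_eq_zero hc hi)

theorem affineIndependent {v : Fin (n + 1) → V} (hv : LinearlyGeneric K v) {α : Fin (n + 1) → K}
    (hα0 : ∑ i, α i • v i = 0) (hα1 : ∑ i, α i ≠ 0) : AffineIndependent K v := by
  have hα : α 0 ≠ 0 := hv.apply_ne_zero hα0 (by rintro rfl; simp at hα1) 0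
  rw [affineIndependent_iff_of_fintype]
  intro c hc_sum hc_rel
  rw [Finset.univ.weightedVSub_eq_linear_combination hc_sum] at hc_rel
  -- Subtracting a multiple of `α` kills the coefficient at `0`, hence every coefficient.
  have hmul : c - (c 0 / α 0) • α = 0 := by
    refine hv.eq_zero_of_apply_eq_zero (i₀ := 0) ?_ (by simp [hα])
    simp only [Pi.sub_apply, Pi.smul_apply, smul_eq_mul, sub_smul, mul_smul,
      Finset.sum_sub_distrib, ← Finset.smul_sum, hc_rel, hα0, smul_zero, sub_zero]
  rw [sub_eq_zero] at hmul
  have hscalar : c 0 / α 0 = 0 := by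
    rw [hmul] at hc_sum
    simpa [← Finset.mul_sum, hα1] using hc_sum
  intro i
  rw [hmul, hscalar, zero_smul, Pi.zero_apply]

end LinearlyGeneric

end Genericity

section GridEdge

variable {K V W : Type*} [Field K] [AddCommGroup V] [Module K V] [AddCommGroup W] [Module K W]
  {n k : ℕ}

/-- The edge vectors of the grid of points `(v_i, w_j)`: the horizontal edges `(v_{u+1} - v_u, 0)`
and the vertical edges `(0, w_{t+1} - w_t)`. -/
def gridEdge (v : Fin (n + 1) → V) (w : Fin (k + 1) → W) : Fin n ⊕ Fin k → V × W :=
  Sum.elim (fun u => (consecutiveDiff v u, 0)) (fun t => (0, consecutiveDiff w t))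

/-- The value of `C` that an admissible path attains on a given grid edge: `A_u` on horizontal
edges and `B_t` on vertical ones. -/
def edgeCoeff (α : Fin (n + 1) → K) (β : Fin (k + 1) → K) : Fin n ⊕ Fin k → K :=
  Sum.elim (fun u => partialSum α u) (fun t => partialSum β t)

theorem linearIndependent_gridEdge {v : Fin (n + 1) → V} {w : Fin (k + 1) → W}
    (hv : AffineIndependent K v) (hw : AffineIndependent K w) :
    LinearIndependent K (gridEdge v w) :=
  linearIndependent_inl_union_inr' (linearIndependent_consecutiveDiff hv)
    (linearIndependent_consecutiveDiff hw)

theorem sum_edgeCoeff_smul_gridEdge {v : Fin (n + 1) → V} {w : Fin (k + 1) → W}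
    {α : Fin (n + 1) → K} {β : Fin (k + 1) → K}
    (hα0 : ∑ i, α i • v i = 0) (hα1 : ∑ i, α i = 1)
    (hβ0 : ∑ j, β j • w j = 0) (hβ1 : ∑ j, β j = 1) :
    ∑ e, edgeCoeff α β e • gridEdge v w e = (v (Fin.last n), w (Fin.last k)) := by
  rw [← sum_partialSum_smul_consecutiveDiff hα0 hα1, ← sum_partialSum_smul_consecutiveDiff hβ0 hβ1]
  ext <;> simp [edgeCoeff, gridEdge, Prod.fst_sum, Prod.snd_sum]

end GridEdge

section Steps

variable {n k : ℕ} {γ : ℕ → Fin (n + 1) × Fin (k + 1)}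

/-- The `j`-th step of `γ` goes along the grid edge `e`: for `e = .inl u` the first coordinate
increases from `u` to `u + 1`, for `e = .inr t` the second one from `t` to `t + 1`, the other
coordinate being constant. -/
def TraversesEdge (γ : ℕ → Fin (n + 1) × Fin (k + 1)) (j : ℕ) : Fin n ⊕ Fin k → Prop
  | .inl u => ∃ s, γ j = (u.castSucc, s) ∧ γ (j + 1) = (u.succ, s)
  | .inr t => ∃ r, γ j = (r, t.castSucc) ∧ γ (j + 1) = (r, t.succ)

theorem TraversesEdge.le {j : ℕ} {e : Fin n ⊕ Fin k} (he : TraversesEdge γ j e) :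
    γ j ≤ γ (j + 1) := by
  rcases e with u | t <;> obtain ⟨s, hj, hj'⟩ := he <;> rw [hj, hj']
  · exact ⟨u.castSucc_lt_succ.le, le_rfl⟩
  · exact ⟨le_rfl, t.castSucc_lt_succ.le⟩

namespace AdmissiblePath

theorem exists_traversesEdge (hγ : AdmissiblePath n k γ) {j : ℕ} (hj : j < n + k) :
    ∃ e, TraversesEdge γ j e := by
  rcases hγ.2.2 j hj with ⟨h₁, h₂⟩ | ⟨h₁, h₂⟩
  · exact ⟨.inl ⟨(γ j).1, by omega⟩, (γ j).2, rfl, Prod.ext (Fin.ext h₁) h₂⟩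
  · exact ⟨.inr ⟨(γ j).2, by omega⟩, (γ j).1, rfl, Prod.ext h₁ (Fin.ext h₂)⟩

theorem monotone (hγ : AdmissiblePath n k γ) : Monotone fun j : Fin (n + k + 1) => γ j :=
  Fin.monotone_iff_le_succ.mpr fun j => (hγ.exists_traversesEdge j.is_lt).choose_spec.le

theorem not_traversesEdge_of_lt (hγ : AdmissiblePath n k γ) {i j : Fin (n + k)} (hij : i < j)
    {e : Fin n ⊕ Fin k} (hi : TraversesEdge γ i e) : ¬ TraversesEdge γ j e := by
  have hle : γ (i + 1) ≤ γ j := hγ.monotone (a := i.succ) (b := j.castSucc) hij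
  intro hj
  rcases e with u | t <;> obtain ⟨s, -, hi⟩ := hi <;> obtain ⟨s', hj, -⟩ := hj <;>
    rw [hi, hj] at hle
  · exact hle.1.not_gt u.castSucc_lt_succ
  · exact hle.2.not_gt t.castSucc_lt_succ

theorem exists_equiv_traversesEdge (hγ : AdmissiblePath n k γ) :
    ∃ σ : Fin (n + k) ≃ Fin n ⊕ Fin k, ∀ j : Fin (n + k), TraversesEdge γ j (σ j) := by
  choose σ hσ using fun j : Fin (n + k) => hγ.exists_traversesEdge j.is_lt
  have hinj : Function.Injective σ := Function.Injective.of_lt_imp_ne fun i j hij h =>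
    hγ.not_traversesEdge_of_lt hij (hσ i) (h ▸ hσ j)
  have hbij : Function.Bijective σ :=
    (Fintype.bijective_iff_injective_and_card σ).mpr ⟨hinj, by simp⟩
  exact ⟨.ofBijective σ hbij, hσ⟩

end AdmissiblePath

end Steps

section PathCoefficients

variable {K : Type*} [Field K] {n k : ℕ} {γ : ℕ → Fin (n + 1) × Fin (k + 1)}

theorem pathC_last (α : Fin (n + 1) → K) (β : Fin (k + 1) → K) : pathC α β γ (n + k) = 1 :=
  if_pos rfl

theorem TraversesEdge.pathC_eq {j : ℕ} (hj : j < n + k) {e : Fin n ⊕ Fin k}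
    (he : TraversesEdge γ j e) (α : Fin (n + 1) → K) (β : Fin (k + 1) → K) :
    pathC α β γ j = edgeCoeff α β e := by
  rcases e with u | t <;> obtain ⟨s, h, h'⟩ := he <;> simp [pathC, edgeCoeff, hj.ne, h, h']

theorem sum_pathD (α : Fin (n + 1) → K) (β : Fin (k + 1) → K) :
    ∑ j : Fin (n + k + 1), pathD α β γ j = 1 := by
  rw [← partialSum_last, ← pathC_last α β]
  exact partialSum_backwardDiff (pathC α β γ) (Fin.last (n + k))

namespace AdmissiblePath

variable {α : Fin (n + 1) → K} {β : Fin (k + 1) → K}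

theorem pathC_eq_left_or (hγ : AdmissiblePath n k γ) (hα1 : ∑ i, α i = 1) {j : ℕ}
    (hj : j ≤ n + k) :
    pathC α β γ j = partialSum α (γ j).1 ∨ ∃ t : Fin k, pathC α β γ j = partialSum β t := by
  rcases hj.lt_or_eq with hlt | rfl
  · obtain ⟨u | t, he⟩ := hγ.exists_traversesEdge hlt
    · have hC := he.pathC_eq hlt α β
      obtain ⟨s, h, -⟩ := he
      rw [h]
      exact .inl hC
    · exact .inr ⟨t, he.pathC_eq hlt α β⟩
  · exact .inl (by simp [pathC_last, hγ.2.1, partialSum_last, hα1])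

theorem pathC_eq_right_or (hγ : AdmissiblePath n k γ) (hβ1 : ∑ i, β i = 1) {j : ℕ}
    (hj : j ≤ n + k) :
    pathC α β γ j = partialSum β (γ j).2 ∨ ∃ u : Fin n, pathC α β γ j = partialSum α u := by
  rcases hj.lt_or_eq with hlt | rfl
  · obtain ⟨u | t, he⟩ := hγ.exists_traversesEdge hlt
    · exact .inr ⟨u, he.pathC_eq hlt α β⟩
    · have hC := he.pathC_eq hlt α β
      obtain ⟨s, h, -⟩ := he
      rw [h]
      exact .inl hC
  · exact .inl (by simp [pathC_last, hγ.2.1, partialSum_last, hβ1])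

theorem pathC_zero_ne_zero (hγ : AdmissiblePath n k γ) (hα : ∀ i, α i ≠ 0) (hβ : ∀ j, β j ≠ 0) :
    pathC α β γ 0 ≠ 0 := by
  rcases (Nat.zero_le (n + k)).lt_or_eq with hlt | heq
  · obtain ⟨u | t, he⟩ := hγ.exists_traversesEdge hlt <;> rw [he.pathC_eq hlt] <;>
      obtain ⟨s, h, -⟩ := he <;> rw [hγ.1, Prod.ext_iff] at h
    · have hu : (u : ℕ) = 0 := (congrArg Fin.val h.1).symm
      simpa [edgeCoeff, hu, partialSum_zero] using hα 0
    · have ht : (t : ℕ) = 0 := (congrArg Fin.val h.2).symm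
      simpa [edgeCoeff, ht, partialSum_zero] using hβ 0
  · rw [heq, pathC_last]
    exact one_ne_zero

theorem pathC_succ_ne_pathC (hγ : AdmissiblePath n k γ)
    (hα : ∀ i, α i ≠ 0) (hβ : ∀ j, β j ≠ 0) (hα1 : ∑ i, α i = 1) (hβ1 : ∑ j, β j = 1)
    (hne : ∀ (u : Fin n) (t : Fin k), partialSum α u ≠ partialSum β t) {j : ℕ} (hj : j < n + k) :
    pathC α β γ (j + 1) ≠ pathC α β γ j := by
  obtain ⟨u | t, he⟩ := hγ.exists_traversesEdge hj <;> rw [he.pathC_eq hj] <;>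
    obtain ⟨s, -, h⟩ := he
  · rcases hγ.pathC_eq_left_or (β := β) hα1 hj with hC | ⟨t, hC⟩ <;> rw [hC]
    · rw [h, partialSum_succ]
      exact add_ne_left.mpr (hα u.succ)
    · exact (hne u t).symm
  · rcases hγ.pathC_eq_right_or (α := α) hβ1 hj with hC | ⟨u, hC⟩ <;> rw [hC]
    · rw [h, partialSum_succ]
      exact add_ne_left.mpr (hβ t.succ)
    · exact hne u t

theorem pathD_ne_zero (hγ : AdmissiblePath n k γ)
    (hα : ∀ i, α i ≠ 0) (hβ : ∀ j, β j ≠ 0) (hα1 : ∑ i, α i = 1) (hβ1 : ∑ j, β j = 1)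
    (hne : ∀ (u : Fin n) (t : Fin k), partialSum α u ≠ partialSum β t) {j : ℕ} (hj : j ≤ n + k) :
    pathD α β γ j ≠ 0 := by
  cases j with
  | zero => simpa [pathD] using hγ.pathC_zero_ne_zero hα hβ
  | succ j => simpa [pathD, sub_eq_zero] using hγ.pathC_succ_ne_pathC hα hβ hα1 hβ1 hne hj

end AdmissiblePath

end PathCoefficients

section PathRelations

variable {K V W : Type*} [Field K] [AddCommGroup V] [Module K V] [AddCommGroup W] [Module K W]
  {n k : ℕ} {γ : ℕ → Fin (n + 1) × Fin (k + 1)} {v : Fin (n + 1) → V} {w : Fin (k + 1) → W}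

/-- The points `(v_{γ(j)_1}, w_{γ(j)_2})` of `V × W` visited by the path `γ`. -/
def pathPoint (v : Fin (n + 1) → V) (w : Fin (k + 1) → W) (γ : ℕ → Fin (n + 1) × Fin (k + 1))
    (j : Fin (n + k + 1)) : V × W :=
  (v (γ j).1, w (γ j).2)

theorem TraversesEdge.consecutiveDiff_pathPoint {j : Fin (n + k)} {e : Fin n ⊕ Fin k}
    (he : TraversesEdge γ j e) (v : Fin (n + 1) → V) (w : Fin (k + 1) → W) :
    consecutiveDiff (pathPoint v w γ) j = gridEdge v w e := by
  rcases e with u | t <;> obtain ⟨s, h, h'⟩ := he <;>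
    simp [consecutiveDiff, pathPoint, gridEdge, h, h']

namespace AdmissiblePath

theorem linearIndependent_consecutiveDiff_pathPoint (hγ : AdmissiblePath n k γ)
    (hv : AffineIndependent K v) (hw : AffineIndependent K w) :
    LinearIndependent K (consecutiveDiff (pathPoint v w γ)) := by
  obtain ⟨σ, hσ⟩ := hγ.exists_equiv_traversesEdge
  have hdiff : consecutiveDiff (pathPoint v w γ) = gridEdge v w ∘ σ :=
    funext fun j => (hσ j).consecutiveDiff_pathPoint v w
  rw [hdiff]
  exact (linearIndependent_gridEdge hv hw).comp σ σ.injective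

variable {α : Fin (n + 1) → K} {β : Fin (k + 1) → K}

theorem sum_pathC_smul_consecutiveDiff_pathPoint (hγ : AdmissiblePath n k γ)
    (hα0 : ∑ i, α i • v i = 0) (hα1 : ∑ i, α i = 1)
    (hβ0 : ∑ j, β j • w j = 0) (hβ1 : ∑ j, β j = 1) :
    ∑ j : Fin (n + k), pathC α β γ j • consecutiveDiff (pathPoint v w γ) j =
      pathPoint v w γ (Fin.last (n + k)) := by
  obtain ⟨σ, hσ⟩ := hγ.exists_equiv_traversesEdge
  calc ∑ j : Fin (n + k), pathC α β γ j • consecutiveDiff (pathPoint v w γ) j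
      = ∑ j, edgeCoeff α β (σ j) • gridEdge v w (σ j) := by
        refine Finset.sum_congr rfl fun j _ => ?_
        rw [(hσ j).pathC_eq j.is_lt, (hσ j).consecutiveDiff_pathPoint]
    _ = ∑ e, edgeCoeff α β e • gridEdge v w e :=
        σ.sum_comp fun e => edgeCoeff α β e • gridEdge v w e
    _ = (v (Fin.last n), w (Fin.last k)) := sum_edgeCoeff_smul_gridEdge hα0 hα1 hβ0 hβ1
    _ = pathPoint v w γ (Fin.last (n + k)) := by simp [pathPoint, hγ.2.1]

theorem sum_pathD_smul_pathPoint (hγ : AdmissiblePath n k γ)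
    (hα0 : ∑ i, α i • v i = 0) (hα1 : ∑ i, α i = 1)
    (hβ0 : ∑ j, β j • w j = 0) (hβ1 : ∑ j, β j = 1) :
    ∑ j : Fin (n + k + 1), pathD α β γ j • pathPoint v w γ j = 0 := by
  have hC (j : Fin (n + k)) :
      partialSum (fun i : Fin (n + k + 1) => pathD α β γ i) j = pathC α β γ j :=
    partialSum_backwardDiff (pathC α β γ) j.castSucc
  simp only [sum_smul_eq_sub_sum_partialSum_smul, sum_pathD, hC,
    hγ.sum_pathC_smul_consecutiveDiff_pathPoint hα0 hα1 hβ0 hβ1, one_smul, sub_self]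

theorem partialSum_eq_pathC (hγ : AdmissiblePath n k γ)
    (hv : AffineIndependent K v) (hw : AffineIndependent K w)
    (hα0 : ∑ i, α i • v i = 0) (hα1 : ∑ i, α i = 1)
    (hβ0 : ∑ j, β j • w j = 0) (hβ1 : ∑ j, β j = 1) {Ξ : Fin (n + k + 1) → K}
    (hΞ0 : ∑ j, Ξ j • pathPoint v w γ j = 0) (hΞ1 : ∑ j, Ξ j = 1) (j : Fin (n + k + 1)) :
    partialSum Ξ j = pathC α β γ j := by
  have hrel : ∑ j : Fin (n + k),
      (partialSum Ξ j - pathC α β γ j) • consecutiveDiff (pathPoint v w γ) j = 0 := by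
    simp only [sub_smul, Finset.sum_sub_distrib, sum_partialSum_smul_consecutiveDiff hΞ0 hΞ1,
      hγ.sum_pathC_smul_consecutiveDiff_pathPoint hα0 hα1 hβ0 hβ1, sub_self]
  have hindep := hγ.linearIndependent_consecutiveDiff_pathPoint hv hw
  rw [Fintype.linearIndependent_iff] at hindep
  cases j using Fin.lastCases with
  | last => rw [Fin.val_last, partialSum_last, hΞ1, pathC_last]
  | cast j => exact sub_eq_zero.mp (hindep _ hrel j)

theorem eq_pathD (hγ : AdmissiblePath n k γ)
    (hv : AffineIndependent K v) (hw : AffineIndependent K w)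
    (hα0 : ∑ i, α i • v i = 0) (hα1 : ∑ i, α i = 1)
    (hβ0 : ∑ j, β j • w j = 0) (hβ1 : ∑ j, β j = 1) {Ξ : Fin (n + k + 1) → K}
    (hΞ0 : ∑ j, Ξ j • pathPoint v w γ j = 0) (hΞ1 : ∑ j, Ξ j = 1) (j : Fin (n + k + 1)) :
    Ξ j = pathD α β γ j := by
  have hC := hγ.partialSum_eq_pathC hv hw hα0 hα1 hβ0 hβ1 hΞ0 hΞ1
  rw [← backwardDiff_partialSum Ξ j]
  cases j using Fin.cases with
  | zero => simpa [backwardDiff, pathD] using hC 0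
  | succ j => simpa [backwardDiff, pathD] using congrArg₂ (· - ·) (hC j.succ) (hC j.castSucc)

end AdmissiblePath

end PathRelations

theorem stmt16_general (K V W : Type*) [Field K]
    [AddCommGroup V] [Module K V] [AddCommGroup W] [Module K W]
    (n k : ℕ) (v : Fin (n + 1) → V) (w : Fin (k + 1) → W)
    (hv : LinearlyGeneric K v) (hw : LinearlyGeneric K w)
    (α : Fin (n + 1) → K) (β : Fin (k + 1) → K)
    (hα0 : ∑ i, α i • v i = 0) (hα1 : ∑ i, α i = 1)
    (hβ0 : ∑ j, β j • w j = 0) (hβ1 : ∑ j, β j = 1)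
    (γ : ℕ → Fin (n + 1) × Fin (k + 1)) (hγ : AdmissiblePath n k γ) :
    (∑ j ∈ Finset.range (n + k + 1),
        pathD α β γ j • ((v (γ j).1, w (γ j).2) : V × W) = 0) ∧
    (∀ Ξ : ℕ → K,
      (∑ j ∈ Finset.range (n + k + 1), Ξ j • ((v (γ j).1, w (γ j).2) : V × W) = 0) →
      (∑ j ∈ Finset.range (n + k + 1), Ξ j = 1) →
      ∀ j ≤ n + k, Ξ j = pathD α β γ j) ∧
    ((∀ (u : Fin n) (t : Fin k), partialSum α (u : ℕ) ≠ partialSum β (t : ℕ)) →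
      ∀ j ≤ n + k, pathD α β γ j ≠ 0) := by
  have hα : ∀ i, α i ≠ 0 := hv.apply_ne_zero hα0 (by rintro rfl; simp at hα1)
  have hβ : ∀ j, β j ≠ 0 := hw.apply_ne_zero hβ0 (by rintro rfl; simp at hβ1)
  have hv_aff : AffineIndependent K v := hv.affineIndependent hα0 (by simp [hα1])
  have hw_aff : AffineIndependent K w := hw.affineIndependent hβ0 (by simp [hβ1])
  refine ⟨?_, fun Ξ hΞ0 hΞ1 j hj => ?_,
    fun hne j hj => hγ.pathD_ne_zero hα hβ hα1 hβ1 hne hj⟩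
  · rw [Finset.sum_range]
    exact hγ.sum_pathD_smul_pathPoint hα0 hα1 hβ0 hβ1
  · rw [Finset.sum_range] at hΞ0 hΞ1
    exact hγ.eq_pathD hv_aff hw_aff hα0 hα1 hβ0 hβ1 (Ξ := fun j => Ξ j) hΞ0 hΞ1
      ⟨j, Nat.lt_succ_of_le hj⟩

theorem stmt16 (K V W : Type*) [Field K]
    [AddCommGroup V] [Module K V] [AddCommGroup W] [Module K W]
    (n k : ℕ) (hn : 1 ≤ n) (hk : 1 ≤ k)
    (hdV : Module.finrank K V = n) (hdW : Module.finrank K W = k)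
    (v : Fin (n + 1) → V) (w : Fin (k + 1) → W)
    (hv : ∀ s : Finset (Fin (n + 1)), s.card = n →
      LinearIndependent K (fun i : s => v i.1))
    (hw : ∀ s : Finset (Fin (k + 1)), s.card = k →
      LinearIndependent K (fun i : s => w i.1))
    (α : Fin (n + 1) → K) (β : Fin (k + 1) → K)
    (hα0 : ∑ i, α i • v i = 0) (hα1 : ∑ i, α i = 1)
    (hβ0 : ∑ j, β j • w j = 0) (hβ1 : ∑ j, β j = 1)
    (γ : ℕ → Fin (n + 1) × Fin (k + 1)) (hγ : AdmissiblePath n k γ) :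
    (∑ j ∈ Finset.range (n + k + 1),
        pathD α β γ j • ((v (γ j).1, w (γ j).2) : V × W) = 0) ∧
    (∀ Ξ : ℕ → K,
      (∑ j ∈ Finset.range (n + k + 1), Ξ j • ((v (γ j).1, w (γ j).2) : V × W) = 0) →
      (∑ j ∈ Finset.range (n + k + 1), Ξ j = 1) →
      ∀ j ≤ n + k, Ξ j = pathD α β γ j) ∧
    ((∀ (u : Fin n) (t : Fin k), partialSum α (u : ℕ) ≠ partialSum β (t : ℕ)) →
      ∀ j ≤ n + k, pathD α β γ j ≠ 0) := by
  exact stmt16_general K V W n k v w hv hw α β hα0 hα1 hβ0 hβ1 γ hγ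
end
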